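/- Let W be a Weyl candidate on Minkowski space V, n a unit timelike vector, E = E(W) and B = B(W) its electric and magnetic parts, ε the spatial volume form, and l_{μν} := η_{μν} + 2 n_μ n_ν (components with respect to the standard basis, n_μ = η(n,e_μ)). Then W is reconstructed from E and B by the identity W_{μνλσ} = 2( l_{μ[λ} E_{σ]ν} − l_{ν[λ} E_{σ]μ} − n_{[λ} B_{σ]τ} ε^{τ}_{ μν} − n_{[μ} B_{ν]τ} ε^{τ}_{ λσ} ), where square brackets denote antisymmetrization with weight ½ and indices are raised with η. -/

import Mathlib

noncomputable section

/-- Minkowski space `V = ℝ⁴`. -/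
abbrev V4 : Type := Fin 4 → ℝ

/-- The Minkowski bilinear form of signature `(-,+,+,+)`. -/
def η (x y : V4) : ℝ := -(x 0 * y 0) + x 1 * y 1 + x 2 * y 2 + x 3 * y 3

/-- The standard basis of `V4`. -/
def e4 (a : Fin 4) : V4 := Pi.single a 1

/-- Components of the Minkowski metric `diag(-1,1,1,1)` (its own inverse). -/
def ηm (a b : Fin 4) : ℝ := if a = b then (if a = (0 : Fin 4) then -1 else 1) else 0

/-- A 4-linear form on `V4`, given by its components in the standard basis. -/
abbrev T4 : Type := Fin 4 → Fin 4 → Fin 4 → Fin 4 → ℝ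

/-- A bilinear form on `V4`, given by its components in the standard basis. -/
abbrev T2 : Type := Fin 4 → Fin 4 → ℝ

/-- Evaluation of a 4-linear form (given by components) on vectors. -/
def eval4 (W : T4) (x y z w : V4) : ℝ :=
  ∑ a : Fin 4, ∑ b : Fin 4, ∑ c : Fin 4, ∑ d : Fin 4, W a b c d * x a * y b * z c * w d

/-- The alternating volume 4-form with `vol(e₀,e₁,e₂,e₃) = 1`. -/
def volv (x y z w : V4) : ℝ := Matrix.det (Matrix.of ![x, y, z, w])

/-- Components `η_{αβγδ}` of the volume form. -/
def volc (a b c d : Fin 4) : ℝ := volv (e4 a) (e4 b) (e4 c) (e4 d)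

/-- Left dual `(*W)_{μνλρ} = ½ η_{μν}{}^{αβ} W_{αβλρ}`. -/
def leftDual (W : T4) : T4 := fun μ ν lam ρ =>
  (1/2) * ∑ γ : Fin 4, ∑ δ : Fin 4, ∑ a : Fin 4, ∑ b : Fin 4,
    volc μ ν γ δ * ηm γ a * ηm δ b * W a b lam ρ

/-- Right dual `(W*)_{μνλρ} = ½ W_{μν}{}^{αβ} η_{αβλρ}`. -/
def rightDual (W : T4) : T4 := fun μ ν lam ρ =>
  (1/2) * ∑ γ : Fin 4, ∑ δ : Fin 4, ∑ a : Fin 4, ∑ b : Fin 4,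
    W μ ν a b * ηm a γ * ηm b δ * volc γ δ lam ρ

/-- A Weyl candidate: pair antisymmetries, pair exchange, first Bianchi, trace-free. -/
def IsWeyl (W : T4) : Prop :=
  (∀ x y z w : V4, eval4 W x y z w = - eval4 W y x z w) ∧
  (∀ x y z w : V4, eval4 W x y z w = - eval4 W x y w z) ∧
  (∀ x y z w : V4, eval4 W x y z w = eval4 W z w x y) ∧
  (∀ x y z w : V4, eval4 W x y z w + eval4 W x z w y + eval4 W x w y z = 0) ∧
  (∀ x y : V4, ∑ a : Fin 4, ∑ b : Fin 4, ηm a b * eval4 W (e4 a) x (e4 b) y = 0)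

/-- Electric part `E(W)_{ab} = W(e_a, n, e_b, n)`. -/
def Epart (W : T4) (n : V4) : T2 := fun a b => eval4 W (e4 a) n (e4 b) n

/-- Magnetic part `B(W)_{ab} = (W*)(e_a, n, e_b, n)`. -/
def Bpart (W : T4) (n : V4) : T2 := fun a b => eval4 (rightDual W) (e4 a) n (e4 b) n

/-- Raise both indices of a bilinear form's components. -/
def up2 (S : T2) : T2 := fun a b => ∑ c : Fin 4, ∑ d : Fin 4, ηm a c * ηm b d * S c d

/-- Full contraction `S_{ab} T^{ab}`. -/
def contr2 (S T : T2) : ℝ := ∑ a : Fin 4, ∑ b : Fin 4, S a b * up2 T a b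

/-- Evaluating a 4-linear form on basis vectors gives its components. -/
lemma eval4_e4 (W : T4) (a b c d : Fin 4) :
    eval4 W (e4 a) (e4 b) (e4 c) (e4 d) = W a b c d := by
  simp [eval4, e4, Pi.single_apply]

lemma eval4_e4_fst_thd (W : T4) (n : V4) (a c : Fin 4) :
    eval4 W (e4 a) n (e4 c) n = ∑ b, ∑ d, W a b c d * n b * n d := by
  simp [eval4, e4, Pi.single_apply]

lemma η_e4 (n : V4) (a : Fin 4) : η n (e4 a) = ηm a a * n a := by
  fin_cases a <;> simp [η, e4, ηm]

/-- Cofactor expansion of the volume form. -/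
lemma volv_eq (x y z w : V4) : volv x y z w =
    (x 0 * y 1 - x 1 * y 0) * (z 2 * w 3 - z 3 * w 2)
    - (x 0 * y 2 - x 2 * y 0) * (z 1 * w 3 - z 3 * w 1)
    + (x 0 * y 3 - x 3 * y 0) * (z 1 * w 2 - z 2 * w 1)
    + (x 1 * y 2 - x 2 * y 1) * (z 0 * w 3 - z 3 * w 0)
    - (x 1 * y 3 - x 3 * y 1) * (z 0 * w 2 - z 2 * w 0)
    + (x 2 * y 3 - x 3 * y 2) * (z 0 * w 1 - z 1 * w 0) := by
  simp [volv, Matrix.det_succ_row_zero, Fin.sum_univ_succ, Fin.succAbove]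
  ring

lemma volv_swap_right (x y z w : V4) : volv x y z w = -volv x y w z := by
  simp only [volv_eq]; ring

/-- Two antisymmetric arrays agreeing above the diagonal agree. -/
lemma eq_of_antisymm_of_lt {ι : Type*} [LinearOrder ι] {f g : ι → ι → ℝ}
    (hf : ∀ a b, f a b = -f b a) (hg : ∀ a b, g a b = -g b a)
    (h : ∀ a b, a < b → f a b = g a b) (a b : ι) : f a b = g a b := by
  rcases lt_trichotomy a b with hab | rfl | hab
  · exact h a b hab
  · linarith [hf a a, hg a a]
  · rw [hf, hg, h b a hab]

/-- Components of the right dual of a form antisymmetric in its last pair. -/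
lemma rightDual_eq {W : T4} (hW : ∀ a b c d, W a b c d = -W a b d c) (a b c d : Fin 4) :
    rightDual W a b c d =
      W a b 2 3 * ((e4 c) 0 * (e4 d) 1 - (e4 c) 1 * (e4 d) 0)
      - W a b 1 3 * ((e4 c) 0 * (e4 d) 2 - (e4 c) 2 * (e4 d) 0)
      + W a b 1 2 * ((e4 c) 0 * (e4 d) 3 - (e4 c) 3 * (e4 d) 0)
      - W a b 0 3 * ((e4 c) 1 * (e4 d) 2 - (e4 c) 2 * (e4 d) 1)
      + W a b 0 2 * ((e4 c) 1 * (e4 d) 3 - (e4 c) 3 * (e4 d) 1)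
      - W a b 0 1 * ((e4 c) 2 * (e4 d) 3 - (e4 c) 3 * (e4 d) 2) := by
  generalize hx : e4 c = x
  generalize hy : e4 d = y
  simp only [rightDual, volc, hx, hy, volv_eq]
  simp [ηm, Fin.sum_univ_four, e4, Pi.single_apply]
  rw [hW a b 1 0, hW a b 2 0, hW a b 3 0, hW a b 2 1, hW a b 3 1, hW a b 3 2]
  ring

lemma Bpart_eq {W : T4} (hW : ∀ a b c d, W a b c d = -W a b d c) (n : V4) (a c : Fin 4) :
    Bpart W n a c = ∑ b, n b *
      (W a b 2 3 * ((e4 c) 0 * n 1 - (e4 c) 1 * n 0)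
      - W a b 1 3 * ((e4 c) 0 * n 2 - (e4 c) 2 * n 0)
      + W a b 1 2 * ((e4 c) 0 * n 3 - (e4 c) 3 * n 0)
      - W a b 0 3 * ((e4 c) 1 * n 2 - (e4 c) 2 * n 1)
      + W a b 0 2 * ((e4 c) 1 * n 3 - (e4 c) 3 * n 1)
      - W a b 0 1 * ((e4 c) 2 * n 3 - (e4 c) 3 * n 2)) := by
  rw [Bpart, eval4_e4_fst_thd]
  refine Finset.sum_congr rfl fun b _ ↦ ?_
  simp [rightDual_eq hW, Fin.sum_univ_four, e4]
  ring

/-- The reconstruction of a form from its electric and magnetic parts, homogenized so that it is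
of degree four in the vector `n`. -/
def emReconstruction (W : T4) (n : V4) : T4 := fun μ ν lam σ =>
  (2 * η n (e4 μ) * η n (e4 lam) - η n n * ηm μ lam) * Epart W n σ ν
  - (2 * η n (e4 μ) * η n (e4 σ) - η n n * ηm μ σ) * Epart W n lam ν
  - (2 * η n (e4 ν) * η n (e4 lam) - η n n * ηm ν lam) * Epart W n σ μ
  + (2 * η n (e4 ν) * η n (e4 σ) - η n n * ηm ν σ) * Epart W n lam μ
  - ∑ τ, (η n (e4 lam) * Bpart W n σ τ - η n (e4 σ) * Bpart W n lam τ) * ηm τ τ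
      * volv n (e4 τ) (e4 μ) (e4 ν)
  - ∑ τ, (η n (e4 μ) * Bpart W n ν τ - η n (e4 ν) * Bpart W n μ τ) * ηm τ τ
      * volv n (e4 τ) (e4 lam) (e4 σ)

lemma emReconstruction_antisymm_left (W : T4) (n : V4) (a b c d : Fin 4) :
    emReconstruction W n a b c d = -emReconstruction W n b a c d := by
  simp only [emReconstruction, volv_swap_right n _ (e4 a) (e4 b), Fin.sum_univ_four]
  ring

lemma emReconstruction_antisymm_right (W : T4) (n : V4) (a b c d : Fin 4) :
    emReconstruction W n a b c d = -emReconstruction W n a b d c := by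
  simp only [emReconstruction, volv_swap_right n _ (e4 c) (e4 d), Fin.sum_univ_four]
  ring

namespace IsWeyl

variable {W : T4}

lemma antisymm_left (hW : IsWeyl W) (a b c d : Fin 4) : W a b c d = -W b a c d := by
  simpa only [eval4_e4] using hW.1 (e4 a) (e4 b) (e4 c) (e4 d)

lemma antisymm_right (hW : IsWeyl W) (a b c d : Fin 4) : W a b c d = -W a b d c := by
  simpa only [eval4_e4] using hW.2.1 (e4 a) (e4 b) (e4 c) (e4 d)

lemma pair_symm (hW : IsWeyl W) (a b c d : Fin 4) : W a b c d = W c d a b := by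
  simpa only [eval4_e4] using hW.2.2.1 (e4 a) (e4 b) (e4 c) (e4 d)

lemma bianchi (hW : IsWeyl W) (a b c d : Fin 4) :
    W a b c d + W a c d b + W a d b c = 0 := by
  simpa only [eval4_e4] using hW.2.2.2.1 (e4 a) (e4 b) (e4 c) (e4 d)

lemma trace_eq_zero (hW : IsWeyl W) (b d : Fin 4) :
    -W 0 b 0 d + W 1 b 1 d + W 2 b 2 d + W 3 b 3 d = 0 := by
  simpa [eval4_e4, ηm, Fin.sum_univ_four] using hW.2.2.2.2 (e4 b) (e4 d)

lemma self_left (hW : IsWeyl W) (a c d : Fin 4) : W a a c d = 0 := by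
  linarith [hW.antisymm_left a a c d]

lemma self_right (hW : IsWeyl W) (a b c : Fin 4) : W a b c c = 0 := by
  linarith [hW.antisymm_right a b c c]

/-- The dependent components of a Weyl candidate, in terms of ten independent ones. -/
lemma dependent_components (hW : IsWeyl W) :
    W 0 3 0 3 = -W 0 1 0 1 - W 0 2 0 2 ∧ W 1 2 1 2 = W 0 1 0 1 + W 0 2 0 2 ∧
    W 1 3 1 3 = -W 0 2 0 2 ∧ W 2 3 2 3 = -W 0 1 0 1 ∧
    W 1 3 2 3 = W 0 1 0 2 ∧ W 1 2 2 3 = -W 0 1 0 3 ∧ W 1 2 1 3 = W 0 2 0 3 ∧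
    W 0 3 1 3 = -W 0 2 1 2 ∧ W 0 3 2 3 = W 0 1 1 2 ∧ W 0 2 2 3 = -W 0 1 1 3 ∧
    W 0 3 1 2 = W 0 2 1 3 - W 0 1 2 3 := by
  have swap (a b c d : Fin 4) : W a b c d = W b a d c := by
    rw [hW.antisymm_left, hW.antisymm_right, neg_neg]
  have t := hW.trace_eq_zero
  have s := hW.self_left
  have s' := hW.self_right
  refine ⟨?_, ?_, ?_, ?_, ?_, ?_, ?_, ?_, ?_, ?_, ?_⟩
  iterate 4
    linarith [t 0 0, t 1 1, t 2 2, t 3 3, s 0 0 0, s 1 1 1, s 2 2 2, s 3 3 3,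
      swap 1 0 1 0, swap 2 0 2 0, swap 3 0 3 0, swap 2 1 2 1, swap 3 1 3 1, swap 3 2 3 2]
  · linarith [t 1 2, s 1 1 2, s' 2 1 2, swap 3 1 3 2]
  · linarith [t 1 3, s 1 1 3, s' 3 1 3, hW.antisymm_left 2 1 2 3]
  · linarith [t 2 3, s 2 2 3, s' 3 2 3]
  · linarith [t 0 1, s 0 0 1, s' 1 0 1, hW.antisymm_left 2 0 2 1, hW.antisymm_right 0 2 2 1,
      hW.antisymm_left 3 0 3 1, hW.antisymm_right 0 3 3 1]
  · linarith [t 0 2, s 0 0 2, s' 2 0 2, hW.antisymm_left 1 0 1 2,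
      hW.antisymm_left 3 0 3 2, hW.antisymm_right 0 3 3 2]
  · linarith [t 0 3, s 0 0 3, s' 3 0 3, hW.antisymm_left 1 0 1 3, hW.antisymm_left 2 0 2 3]
  · linarith [hW.bianchi 0 1 2 3, hW.antisymm_right 0 2 3 1]

set_option maxHeartbeats 4000000 in
/-- A Weyl candidate agrees, up to the factor `η n n ^ 2`, with its reconstruction. -/
lemma sq_mul_eq_emReconstruction (hW : IsWeyl W) (n : V4) (μ ν lam σ : Fin 4) :
    η n n ^ 2 * W μ ν lam σ = emReconstruction W n μ ν lam σ := by
  obtain ⟨h₁, h₂, h₃, h₄, h₅, h₆, h₇, h₈, h₉, h₁₀, h₁₁⟩ := hW.dependent_components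
  have left := hW.antisymm_left
  have right := hW.antisymm_right
  have pair := hW.pair_symm
  have self_left := hW.self_left
  have self_right := hW.self_right
  refine eq_of_antisymm_of_lt (f := fun a b ↦ η n n ^ 2 * W a b lam σ)
    (g := fun a b ↦ emReconstruction W n a b lam σ)
    (fun a b ↦ by simp only [left a b, mul_neg])
    (fun a b ↦ emReconstruction_antisymm_left ..) (fun a b hab ↦ ?_) μ ν
  refine eq_of_antisymm_of_lt (f := fun c d ↦ η n n ^ 2 * W a b c d)
    (g := emReconstruction W n a b)
    (fun c d ↦ by simp only [right a b c d, mul_neg])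
    (fun c d ↦ emReconstruction_antisymm_right ..) (fun c d hcd ↦ ?_) lam σ
  simp only [emReconstruction, η_e4, Epart, eval4_e4_fst_thd, Bpart_eq right, volv_eq]
  fin_cases a <;> fin_cases b <;> first | exact absurd hab (by decide) | skip
  all_goals fin_cases c <;> fin_cases d <;> first | exact absurd hcd (by decide) | skip
  all_goals
    simp only [Fin.sum_univ_four, e4, Pi.single_apply, ηm, η, Fin.isValue, Fin.zero_eta, Fin.mk_one,
      Fin.reduceFinMk, Fin.reduceEq, zero_ne_one, one_ne_zero, reduceIte, mul_zero, zero_mul,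
      sub_zero, zero_sub, add_zero, zero_add, mul_one, one_mul, neg_zero, sub_self,
      left 1 0, left 2 0, left 3 0, left 2 1, left 3 1, left 3 2, self_left, right _ _ 1 0,
      right _ _ 2 0, right _ _ 3 0, right _ _ 2 1, right _ _ 3 1, right _ _ 3 2, self_right,
      pair 0 2 0 1, pair 0 3 0 1, pair 0 3 0 2, pair 1 2 0 1, pair 1 2 0 2, pair 1 2 0 3,
      pair 1 3 0 1, pair 1 3 0 2, pair 1 3 0 3, pair 1 3 1 2, pair 2 3 0 1, pair 2 3 0 2,
      pair 2 3 0 3, pair 2 3 1 2, pair 2 3 1 3, h₁, h₂, h₃, h₄, h₅, h₆, h₇, h₈, h₉, h₁₀, h₁₁]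
    ring

end IsWeyl

/-- a Weyl candidate is reconstructed from its electric and magnetic parts. -/
theorem stmt_10 (W : T4) (hW : IsWeyl W) (n : V4) (hn : η n n = -1)
    (E B : T2) (hE : E = Epart W n) (hB : B = Bpart W n)
    (nl : Fin 4 → ℝ) (hnl : ∀ μ, nl μ = η n (e4 μ))
    (l : T2) (hl : l = fun μ ν => ηm μ ν + 2 * nl μ * nl ν)
    (εc : Fin 4 → Fin 4 → Fin 4 → ℝ)
    (hεc : ∀ a b c, εc a b c = volv n (e4 a) (e4 b) (e4 c)) :
    ∀ μ ν lam σ, W μ ν lam σ =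
      2 * ((1/2) * (l μ lam * E σ ν - l μ σ * E lam ν)
        - (1/2) * (l ν lam * E σ μ - l ν σ * E lam μ)
        - (1/2) * (∑ τ : Fin 4, ∑ τ' : Fin 4,
            (nl lam * B σ τ - nl σ * B lam τ) * ηm τ τ' * εc τ' μ ν)
        - (1/2) * (∑ τ : Fin 4, ∑ τ' : Fin 4,
            (nl μ * B ν τ - nl ν * B μ τ) * ηm τ τ' * εc τ' lam σ)) := by
  intro μ ν lam σ
  have h := hW.sq_mul_eq_emReconstruction n μ ν lam σ
  have raise (f g : Fin 4 → ℝ) :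
      ∑ τ, ∑ τ', f τ * ηm τ τ' * g τ' = ∑ τ, f τ * ηm τ τ * g τ := by
    simp [ηm]
  simp only [emReconstruction, hn] at h
  simp only [hE, hB, hl, hnl, hεc, raise]
  linear_combination h
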